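/- There exists a constant C = C(m₁, m₂) such that for every u ≥ 1 and every r ∈ ℝ, ∫_{ {s : −u ≤ s ≤ u, s ≤ r} } ψ̃(u,s) · e^{ρ s} ds ≤ C · e^{ρ u} · e^{ρ r}. -/

import Mathlib

open MeasureTheory ENNReal NNReal

noncomputable section

/-- The kernel `ψ̃(t,s) = sinh t · (cosh t)^{m₂/2} · (cosh t − cosh s)^{(m₁+m₂−2)/2}`
(real powers; the factor `(cosh t)^{m₂/2}` is automatically `1` when `m₂ = 0`). -/
def psiT (m₁ m₂ : ℕ) (t s : ℝ) : ℝ :=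
  Real.sinh t * Real.cosh t ^ ((m₂ : ℝ) / 2) *
    (Real.cosh t - Real.cosh s) ^ (((m₁ : ℝ) + (m₂ : ℝ) - 2) / 2)

/-!
With `p = 1 - exp (-(u - s))` and `q = 1 - exp (-(u + s))`, the gap `cosh u - cosh s` equals
`exp u / 2 * (p * q)`. Since `sinh u ≤ exp u * (1 - exp (-u))` and the larger of `p` and `q` is at
least `1 - exp (-u)`, the factor `sinh u` absorbs the larger one, even when `β` is negative:
`(1 - exp (-u)) * max p q ^ β ≤ 1` for `-1 < β`. The remaining `(1 - exp (-x)) ^ β` is at most `1`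
plus `exp (-x) * (1 - exp (-x)) ^ β`, the derivative of `(1 - exp (-x)) ^ (β + 1) / (β + 1)`, whose
integral over the half-line is `1 / (β + 1)`. So the kernel is `O(exp ((1 + α + β) * u))` times
a bounded function plus an integrable one, uniformly in `u`. Against `exp (ρ * s)` on `s ≤ r`, the
first is integrated exactly and for the second the exponential is replaced by `exp (ρ * r)`.
-/

/-- The kernel `ψ̃` with real exponents, `α = m₂ / 2` and `β = (m₁ + m₂ - 2) / 2` in the notation
of `psiT`; its exponential growth rate in `t` is then `1 + α + β = ρ`. -/
def psiKernel (α β t s : ℝ) : ℝ :=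
  Real.sinh t * Real.cosh t ^ α * (Real.cosh t - Real.cosh s) ^ β

/-- The integrable part of `(1 - exp (-x)) ^ β`, which differs from it by `(1 - exp (-x)) ^ (β + 1)`
for `0 < x`. It is extended by zero to `x ≤ 0`, so that its integral is translation invariant. -/
def singularPart (β : ℝ) : ℝ → ℝ :=
  (Set.Ioi 0).indicator fun x => Real.exp (-x) * (1 - Real.exp (-x)) ^ β

section SingularPart

variable {β : ℝ}

lemma one_sub_exp_neg_nonneg {x : ℝ} (hx : 0 ≤ x) : 0 ≤ 1 - Real.exp (-x) := by
  simpa using hx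

lemma singularPart_nonneg (β x : ℝ) : 0 ≤ singularPart β x :=
  Set.indicator_nonneg (fun _ hy =>
    mul_nonneg (Real.exp_pos _).le (Real.rpow_nonneg (one_sub_exp_neg_nonneg (le_of_lt hy)) β)) x

lemma measurable_singularPart (β : ℝ) : Measurable (singularPart β) :=
  Measurable.indicator (by fun_prop) measurableSet_Ioi

lemma one_sub_exp_neg_rpow_le_one_add_singularPart (hβ : -1 < β) {x : ℝ} (hx : 0 ≤ x) :
    (1 - Real.exp (-x)) ^ β ≤ 1 + singularPart β x := by
  rcases hx.eq_or_lt with rfl | hx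
  · simpa [singularPart] using Real.zero_rpow_le_one β
  have hp : 0 ≤ 1 - Real.exp (-x) := one_sub_exp_neg_nonneg hx.le
  have hpow : (1 - Real.exp (-x)) ^ (β + 1) ≤ 1 :=
    Real.rpow_le_one hp (by linarith [Real.exp_pos (-x)]) (by linarith)
  rw [Real.rpow_add_one' hp (by linarith)] at hpow
  rw [singularPart, Set.indicator_of_mem (Set.mem_Ioi.2 hx)]
  linarith

lemma hasDerivAt_one_sub_exp_neg_rpow_div (hβ : β + 1 ≠ 0) {x : ℝ} (hx : 0 < x) :
    HasDerivAt (fun y => (1 - Real.exp (-y)) ^ (β + 1) / (β + 1))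
      (Real.exp (-x) * (1 - Real.exp (-x)) ^ β) x := by
  have hp : 1 - Real.exp (-x) ≠ 0 :=
    (sub_pos.2 (Real.exp_lt_one_iff.2 (neg_lt_zero.2 hx))).ne'
  have hbase : HasDerivAt (fun y => 1 - Real.exp (-y)) (Real.exp (-x)) x := by
    simpa using (hasDerivAt_neg x).exp.const_sub 1
  refine ((hbase.rpow_const (p := β + 1) (.inl hp)).div_const (β + 1)).congr_deriv ?_
  rw [add_sub_cancel_right]
  field_simp

lemma lintegral_singularPart (hβ : -1 < β) :
    ∫⁻ x, ENNReal.ofReal (singularPart β x) = ENNReal.ofReal (1 / (β + 1)) := by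
  have hpos : 0 < β + 1 := by linarith
  have hcont : ContinuousWithinAt (fun y => (1 - Real.exp (-y)) ^ (β + 1) / (β + 1))
      (Set.Ici 0) 0 := by
    refine Continuous.continuousWithinAt (.div_const ?_ _)
    exact Continuous.rpow_const (by fun_prop) fun _ => .inr hpos.le
  have hderiv := fun x (hx : x ∈ Set.Ioi (0 : ℝ)) =>
    hasDerivAt_one_sub_exp_neg_rpow_div hpos.ne' hx
  have hnonneg : ∀ x ∈ Set.Ioi 0, 0 ≤ Real.exp (-x) * (1 - Real.exp (-x)) ^ β := fun x hx => by
    simpa only [singularPart, Set.indicator_of_mem hx] using singularPart_nonneg β x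
  have hlim : Filter.Tendsto (fun y => (1 - Real.exp (-y)) ^ (β + 1) / (β + 1)) Filter.atTop
      (nhds (1 / (β + 1))) := by
    have hexp := Real.tendsto_exp_neg_atTop_nhds_zero.const_sub 1
    simpa using (hexp.rpow_const (p := β + 1) (.inr hpos.le)).div_const (β + 1)
  have hint : Integrable (singularPart β) := (integrable_indicator_iff measurableSet_Ioi).2
    (integrableOn_Ioi_deriv_of_nonneg hcont hderiv hnonneg hlim)
  rw [← ofReal_integral_eq_lintegral_ofReal hint (.of_forall (singularPart_nonneg β)),
    singularPart, integral_indicator measurableSet_Ioi,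
    integral_Ioi_of_hasDerivAt_of_nonneg hcont hderiv hnonneg hlim]
  simp [Real.zero_rpow hpos.ne']

lemma lintegral_singularPart_sub_add_singularPart_add (hβ : -1 < β) (u : ℝ) :
    ∫⁻ s, ENNReal.ofReal (singularPart β (u - s) + singularPart β (u + s)) =
      ENNReal.ofReal (2 / (β + 1)) := by
  have hmeas : Measurable fun s => ENNReal.ofReal (singularPart β (u - s)) :=
    ((measurable_singularPart β).comp (measurable_id.const_sub u)).ennreal_ofReal
  have hpos : 0 ≤ 1 / (β + 1) := one_div_nonneg.2 (by linarith)
  simp only [ENNReal.ofReal_add (singularPart_nonneg _ _) (singularPart_nonneg _ _)]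
  rw [lintegral_add_left hmeas,
    lintegral_sub_left_eq_self (fun x => ENNReal.ofReal (singularPart β x)),
    lintegral_add_left_eq_self (fun x => ENNReal.ofReal (singularPart β x)),
    lintegral_singularPart hβ, ← ENNReal.ofReal_add hpos hpos]
  ring_nf

end SingularPart

section PointwiseBound

variable {α β u s : ℝ}

lemma mul_rpow_le_one {a b : ℝ} (ha : 0 ≤ a) (hab : a ≤ b) (hb : b ≤ 1) (hβ : -1 < β) :
    a * b ^ β ≤ 1 :=
  calc a * b ^ β ≤ b * b ^ β := by gcongr; exact Real.rpow_nonneg (ha.trans hab) β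
    _ = b ^ (1 + β) := (Real.rpow_one_add' (ha.trans hab) (by linarith)).symm
    _ ≤ 1 := Real.rpow_le_one (ha.trans hab) hb (by linarith)

lemma one_sub_exp_neg_mul_rpow_le (hβ : -1 < β) {a x y : ℝ} (ha : 0 ≤ a) (hx : 0 ≤ x)
    (hy : 0 ≤ y) (hmax : a ≤ max x y) :
    (1 - Real.exp (-a)) * ((1 - Real.exp (-x)) * (1 - Real.exp (-y))) ^ β ≤
      1 + (singularPart β x + singularPart β y) := by
  wlog hxy : x ≤ y generalizing x y
  · rw [mul_comm (1 - Real.exp (-x)), add_comm (singularPart β x)]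
    exact this hy hx (max_comm x y ▸ hmax) (le_of_not_ge hxy)
  rw [max_eq_right hxy] at hmax
  have hp := one_sub_exp_neg_nonneg hx
  have hq := one_sub_exp_neg_nonneg hy
  have habsorb : (1 - Real.exp (-a)) * (1 - Real.exp (-y)) ^ β ≤ 1 :=
    mul_rpow_le_one (one_sub_exp_neg_nonneg ha) (by gcongr) (by linarith [Real.exp_pos (-y)]) hβ
  calc (1 - Real.exp (-a)) * ((1 - Real.exp (-x)) * (1 - Real.exp (-y))) ^ β
      = (1 - Real.exp (-a)) * (1 - Real.exp (-y)) ^ β * (1 - Real.exp (-x)) ^ β := by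
        rw [Real.mul_rpow hp hq]; ring
    _ ≤ (1 - Real.exp (-x)) ^ β := mul_le_of_le_one_left (Real.rpow_nonneg hp β) habsorb
    _ ≤ 1 + singularPart β x := one_sub_exp_neg_rpow_le_one_add_singularPart hβ hx
    _ ≤ 1 + (singularPart β x + singularPart β y) := by
        linarith [singularPart_nonneg β y]

lemma cosh_sub_cosh_eq_exp_mul (u s : ℝ) :
    Real.cosh u - Real.cosh s =
      Real.exp u / 2 * ((1 - Real.exp (-(u - s))) * (1 - Real.exp (-(u + s)))) := by
  simp only [Real.cosh_eq, neg_sub, neg_add, Real.exp_add, Real.exp_sub, Real.exp_neg]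
  field_simp
  ring

lemma sinh_le_exp_mul_one_sub_exp_neg (u : ℝ) :
    Real.sinh u ≤ Real.exp u * (1 - Real.exp (-u)) := by
  have hexp : Real.exp u * Real.exp (-u) = 1 := by simp [← Real.exp_add]
  linarith [Real.one_le_cosh u, Real.cosh_add_sinh u]

lemma cosh_rpow_le (α : ℝ) (hu : 0 ≤ u) :
    Real.cosh u ^ α ≤ 2 ^ |α| * Real.exp (α * u) := by
  rw [mul_comm α, Real.exp_mul]
  rcases le_total 0 α with hα | hα
  · have hcosh : Real.cosh u ≤ Real.exp u := by
      linarith [Real.sinh_nonneg_iff.2 hu, Real.cosh_add_sinh u]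
    calc Real.cosh u ^ α ≤ Real.exp u ^ α := by gcongr
      _ ≤ 2 ^ |α| * Real.exp u ^ α :=
        le_mul_of_one_le_left (by positivity) (Real.one_le_rpow one_le_two (abs_nonneg α))
  · have hcosh : Real.exp u / 2 ≤ Real.cosh u := by
      linarith [Real.sinh_lt_cosh u, Real.cosh_add_sinh u]
    calc Real.cosh u ^ α ≤ (Real.exp u / 2) ^ α :=
          Real.rpow_le_rpow_of_nonpos (by positivity) hcosh hα
      _ = 2 ^ |α| * Real.exp u ^ α := by
        rw [abs_of_nonpos hα, Real.rpow_neg zero_le_two,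
          Real.div_rpow (Real.exp_pos u).le zero_le_two, div_eq_inv_mul]

lemma psiKernel_le (α : ℝ) (hβ : -1 < β) (hs : |s| ≤ u) :
    psiKernel α β u s ≤ 2 ^ (|α| - β) * Real.exp ((1 + α + β) * u) *
      (1 + (singularPart β (u - s) + singularPart β (u + s))) := by
  obtain ⟨hsub, hadd⟩ : 0 ≤ u - s ∧ 0 ≤ u + s := by constructor <;> linarith [abs_le.1 hs]
  have hu : 0 ≤ u := (abs_nonneg s).trans hs
  have hmax : u ≤ max (u - s) (u + s) := by grind
  have hpq : 0 ≤ (1 - Real.exp (-(u - s))) * (1 - Real.exp (-(u + s))) :=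
    mul_nonneg (one_sub_exp_neg_nonneg hsub) (one_sub_exp_neg_nonneg hadd)
  have hrate : Real.exp u * (2 ^ |α| * Real.exp (α * u)) * (Real.exp u / 2) ^ β =
      2 ^ (|α| - β) * Real.exp ((1 + α + β) * u) := by
    rw [Real.div_rpow (Real.exp_pos u).le zero_le_two, ← Real.exp_mul, Real.rpow_sub two_pos,
      show (1 + α + β) * u = u + α * u + u * β by ring, Real.exp_add, Real.exp_add]
    ring
  rw [psiKernel, cosh_sub_cosh_eq_exp_mul, Real.mul_rpow (by positivity) hpq]
  set pq := (1 - Real.exp (-(u - s))) * (1 - Real.exp (-(u + s)))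
  calc Real.sinh u * Real.cosh u ^ α * ((Real.exp u / 2) ^ β * pq ^ β)
      ≤ Real.exp u * (1 - Real.exp (-u)) * (2 ^ |α| * Real.exp (α * u)) *
          ((Real.exp u / 2) ^ β * pq ^ β) := by
        have := one_sub_exp_neg_nonneg hu
        gcongr
        · exact sinh_le_exp_mul_one_sub_exp_neg u
        · exact cosh_rpow_le α hu
    _ = 2 ^ (|α| - β) * Real.exp ((1 + α + β) * u) * ((1 - Real.exp (-u)) * pq ^ β) := by
        rw [← hrate]; ring
    _ ≤ _ := by
        gcongr
        exact one_sub_exp_neg_mul_rpow_le hβ hu hsub hadd hmax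

end PointwiseBound

section Integral

variable {α β ρ : ℝ}

lemma lintegral_Iic_exp_mul (hρ : 0 < ρ) (r : ℝ) :
    ∫⁻ s in Set.Iic r, ENNReal.ofReal (Real.exp (ρ * s)) =
      ENNReal.ofReal (1 / ρ) * ENNReal.ofReal (Real.exp (ρ * r)) := by
  rw [← ofReal_integral_eq_lintegral_ofReal (integrableOn_exp_mul_Iic hρ r)
    (.of_forall fun _ => (Real.exp_pos _).le), integral_exp_mul_Iic hρ,
    ← ENNReal.ofReal_mul (by positivity), one_div_mul_eq_div]

lemma lintegral_Iic_exp_mul_one_add_le (hρ : 0 < ρ) (f : ℝ → ℝ≥0∞) (r : ℝ) :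
    ∫⁻ s in Set.Iic r, ENNReal.ofReal (Real.exp (ρ * s)) * (1 + f s) ≤
      (ENNReal.ofReal (1 / ρ) + ∫⁻ s, f s) * ENNReal.ofReal (Real.exp (ρ * r)) := by
  have hperturb : ∫⁻ s in Set.Iic r, ENNReal.ofReal (Real.exp (ρ * s)) * f s ≤
      (∫⁻ s, f s) * ENNReal.ofReal (Real.exp (ρ * r)) :=
    calc ∫⁻ s in Set.Iic r, ENNReal.ofReal (Real.exp (ρ * s)) * f s
        ≤ ∫⁻ s in Set.Iic r, ENNReal.ofReal (Real.exp (ρ * r)) * f s := by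
          refine setLIntegral_mono' measurableSet_Iic fun s hs => ?_
          gcongr
          exact hs
      _ = ENNReal.ofReal (Real.exp (ρ * r)) * ∫⁻ s in Set.Iic r, f s :=
          lintegral_const_mul' _ _ ENNReal.ofReal_ne_top
      _ ≤ (∫⁻ s, f s) * ENNReal.ofReal (Real.exp (ρ * r)) := by
          rw [mul_comm]
          gcongr
          exact Measure.restrict_le_self
  simp only [mul_add, mul_one]
  rw [lintegral_add_left (by fun_prop), lintegral_Iic_exp_mul hρ, add_mul]
  gcongr

theorem psi_exponential_estimate_general (hβ : -1 < β) (hρ : 0 < ρ) (u r : ℝ) :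
    ∫⁻ s in Set.Icc (-u) u ∩ Set.Iic r,
        ENNReal.ofReal (psiKernel α β u s * Real.exp (ρ * s)) ≤
      ENNReal.ofReal (2 ^ (|α| - β) * (1 / ρ + 2 / (β + 1))) *
        ENNReal.ofReal (Real.exp ((1 + α + β) * u) * Real.exp (ρ * r)) := by
  set A := 2 ^ (|α| - β) * Real.exp ((1 + α + β) * u) with hA
  set k := fun s => singularPart β (u - s) + singularPart β (u + s)
  have hk (s : ℝ) : 0 ≤ k s := add_nonneg (singularPart_nonneg _ _) (singularPart_nonneg _ _)
  have hβ' : 0 < β + 1 := by linarith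
  calc ∫⁻ s in Set.Icc (-u) u ∩ Set.Iic r,
        ENNReal.ofReal (psiKernel α β u s * Real.exp (ρ * s))
      ≤ ∫⁻ s in Set.Icc (-u) u ∩ Set.Iic r, ENNReal.ofReal A *
          (ENNReal.ofReal (Real.exp (ρ * s)) * (1 + ENNReal.ofReal (k s))) := by
        refine setLIntegral_mono' (measurableSet_Icc.inter measurableSet_Iic) fun s hs => ?_
        rw [← ENNReal.ofReal_one, ← ENNReal.ofReal_add zero_le_one (hk s),
          ← ENNReal.ofReal_mul (by positivity), ← ENNReal.ofReal_mul (by positivity),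
          mul_left_comm, mul_comm]
        gcongr
        exact psiKernel_le α hβ (abs_le.2 hs.1)
    _ ≤ ∫⁻ s in Set.Iic r, ENNReal.ofReal A *
          (ENNReal.ofReal (Real.exp (ρ * s)) * (1 + ENNReal.ofReal (k s))) :=
        lintegral_mono_set Set.inter_subset_right
    _ = ENNReal.ofReal A * ∫⁻ s in Set.Iic r,
          ENNReal.ofReal (Real.exp (ρ * s)) * (1 + ENNReal.ofReal (k s)) :=
        lintegral_const_mul' _ _ ENNReal.ofReal_ne_top
    _ ≤ ENNReal.ofReal A * ((ENNReal.ofReal (1 / ρ) + ENNReal.ofReal (2 / (β + 1))) *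
          ENNReal.ofReal (Real.exp (ρ * r))) := by
        gcongr
        rw [← lintegral_singularPart_sub_add_singularPart_add hβ u]
        exact lintegral_Iic_exp_mul_one_add_le hρ _ r
    _ = _ := by
        rw [← ENNReal.ofReal_add (by positivity) (by positivity),
          ← ENNReal.ofReal_mul (by positivity), ← ENNReal.ofReal_mul (by positivity),
          ← ENNReal.ofReal_mul (by positivity), hA]
        ring_nf

end Integral

/-- For every `u ≥ 1` and `r ∈ ℝ`,
`∫_{{s : −u ≤ s ≤ u, s ≤ r}} ψ̃(u,s) e^{ρ s} ds ≤ C e^{ρ u} e^{ρ r}`,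
where `ρ = (m₁ + 2m₂)/2`. -/
theorem psi_exponential_estimate (m₁ m₂ : ℕ) (hm₁ : 1 ≤ m₁) :
    ∃ C : ℝ≥0, ∀ (u : ℝ), 1 ≤ u → ∀ r : ℝ,
      (∫⁻ s in Set.Icc (-u) u ∩ Set.Iic r,
          ENNReal.ofReal
            (psiT m₁ m₂ u s * Real.exp (((m₁ : ℝ) + 2 * (m₂ : ℝ)) / 2 * s))) ≤
        C * ENNReal.ofReal
          (Real.exp (((m₁ : ℝ) + 2 * (m₂ : ℝ)) / 2 * u) *
            Real.exp (((m₁ : ℝ) + 2 * (m₂ : ℝ)) / 2 * r)) := by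
  have hm₁' : (1 : ℝ) ≤ m₁ := mod_cast hm₁
  have hβ : -1 < ((m₁ : ℝ) + m₂ - 2) / 2 := by linarith [m₂.cast_nonneg (α := ℝ)]
  have hρ : 0 < ((m₁ : ℝ) + 2 * m₂) / 2 := by positivity
  have hestimate := psi_exponential_estimate_general (α := m₂ / 2) hβ hρ
  rw [show 1 + (m₂ : ℝ) / 2 + (m₁ + m₂ - 2) / 2 = (m₁ + 2 * m₂) / 2 by ring] at hestimate
  exact ⟨_, fun u _ r => hestimate u r⟩

end
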